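/- Chebyshev–Bessel representation of exponential divided differences: let x_0,…,x_q ∈ [a,b] be pairwise distinct with a < b, set c = (b−a)/2, d = (a+b)/2, and y_i = (x_i − d)/c. Then exp[x_0,…,x_q] = (e^d · I_0(c)/c^q) · ( T_0[y_0,…,y_q] + 2·Σ_{n=1}^{∞} (I_n(c)/I_0(c)) · T_n[y_0,…,y_q] ), where the series converges absolutely. -/

import Mathlib

/-- Divided difference of order `q` of `f` on nodes `x 0, …, x q`. -/
noncomputable def divDiff (f : ℝ → ℝ) : (q : ℕ) → (Fin (q + 1) → ℝ) → ℝ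
  | 0, x => f (x 0)
  | q + 1, x =>
      (divDiff f q (fun i => x i.succ) - divDiff f q (fun i => x i.castSucc)) /
        (x (Fin.last (q + 1)) - x 0)

/-- Chebyshev polynomial of the first kind, as a real function. -/
noncomputable def chebT (n : ℤ) : ℝ → ℝ := fun y => (Polynomial.Chebyshev.T ℝ n).eval y

/-- Modified Bessel function of the first kind of integer order `n`. -/
noncomputable def besselI (n : ℕ) (c : ℝ) : ℝ :=
  ∑' m : ℕ, (c / 2) ^ (2 * m + n) / (m.factorial * (m + n).factorial)

/-!
Set `u = (c / 2) w` and `v = (c / 2) w⁻¹`. Collecting the terms of the double series of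
`e ^ u * e ^ v` by the difference `n` of the two exponents gives
`exp ((c / 2) (w + w⁻¹)) = ∑ n : ℤ, I_|n|(c) w ^ n`. Averaging over `w` and `w⁻¹` with
`w = e ^ (iθ)` turns this into `exp (c cos θ) = ∑ n : ℤ, I_|n|(c) T_n(cos θ)`, and complex angles
`θ` make `cos θ` take every real value. Divided differences are finite linear combinations
of values, so they can be taken term by term, and an affine change of nodes only rescales them.
-/

open Polynomial

theorem hasSum_divDiff {ι : Type*} {g : ι → ℝ → ℝ} {f : ℝ → ℝ} (q : ℕ) {x : Fin (q + 1) → ℝ}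
    (h : ∀ i, HasSum (fun n => g n (x i)) (f (x i))) :
    HasSum (fun n => divDiff (g n) q x) (divDiff f q x) := by
  induction q with
  | zero => exact h 0
  | succ q ih => exact ((ih fun i => h i.succ).sub (ih fun i => h i.castSucc)).div_const _

theorem divDiff_const_mul (r : ℝ) (f : ℝ → ℝ) (q : ℕ) (x : Fin (q + 1) → ℝ) :
    divDiff (fun t => r * f t) q x = r * divDiff f q x := by
  induction q with
  | zero => rfl
  | succ q ih => simp only [divDiff, ih, ← mul_sub, mul_div_assoc]

theorem divDiff_affine_nodes (f : ℝ → ℝ) (c d : ℝ) (q : ℕ) (y : Fin (q + 1) → ℝ) :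
    divDiff f q (fun i => c * y i + d) = divDiff (fun t => f (c * t + d)) q y / c ^ q := by
  induction q with
  | zero => simp [divDiff]
  | succ q ih =>
    simp only [divDiff, ih (fun i => y i.succ), ih (fun i => y i.castSucc),
      add_sub_add_right_eq_sub, ← mul_sub, ← sub_div, div_div, pow_succ]
    congr 1
    ring

theorem summable_besselI (n : ℕ) (c : ℝ) :
    Summable fun m : ℕ => (c / 2) ^ (2 * m + n) / ((m.factorial : ℝ) * (m + n).factorial) := by
  refine .of_norm_bounded
    ((Real.summable_pow_div_factorial ((c / 2) ^ 2)).mul_left (|c / 2| ^ n)) fun m => ?_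
  have hfac : (1 : ℝ) ≤ (m + n).factorial := mod_cast (m + n).factorial_pos
  calc ‖(c / 2) ^ (2 * m + n) / ((m.factorial : ℝ) * (m + n).factorial)‖
      = |c / 2| ^ n * ((c / 2) ^ 2) ^ m / (m.factorial * (m + n).factorial) := by
        rw [norm_div, norm_pow, Real.norm_eq_abs, Real.norm_of_nonneg (by positivity), pow_add,
          pow_mul, sq_abs, mul_comm]
    _ ≤ |c / 2| ^ n * ((c / 2) ^ 2) ^ m / m.factorial := by
        gcongr
        exact le_mul_of_one_le_right (by positivity) hfac
    _ = |c / 2| ^ n * (((c / 2) ^ 2) ^ m / m.factorial) := mul_div_assoc ..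

theorem besselI_zero_pos (c : ℝ) : 0 < besselI 0 c := by
  refine (summable_besselI 0 c).tsum_pos (fun m => ?_) 0 (by simp)
  have : 0 ≤ (c / 2) ^ (2 * m + 0) := (even_two_mul m).pow_nonneg _
  positivity

/-- A pair of exponents `(j, k)` encoded by its difference `j - k` and its minimum. Under this
bijection the diagonals of the double exponential series become the series defining `besselI`. -/
def subMinEquiv : ℕ × ℕ ≃ ℤ × ℕ where
  toFun p := (p.1 - p.2, min p.1 p.2)
  invFun p := (p.2 + p.1.toNat, p.2 + (-p.1).toNat)
  left_inv p := by ext <;> simp <;> omega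
  right_inv p := by ext <;> simp; omega

theorem hasSum_exp_add {𝔸 : Type*} [NormedField 𝔸] [NormedAlgebra ℚ 𝔸] [CompleteSpace 𝔸]
    (u v : 𝔸) :
    HasSum (fun p : ℕ × ℕ => u ^ p.1 / (p.1.factorial : 𝔸) * (v ^ p.2 / (p.2.factorial : 𝔸)))
      (NormedSpace.exp (u + v)) := by
  rw [NormedSpace.exp_add]
  have hsummable := summable_mul_of_summable_norm (NormedSpace.norm_expSeries_div_summable u)
    (NormedSpace.norm_expSeries_div_summable v)
  have hprod := (NormedSpace.expSeries_div_hasSum_exp u).mul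
    (NormedSpace.expSeries_div_hasSum_exp v) hsummable
  exact hprod

theorem exp_diagonal_term_eq_besselI_term_mul_zpow (c : ℝ) {w : ℂ} (hw : w ≠ 0) (n : ℤ)
    (m : ℕ) :
    (c / 2 * w) ^ (m + n.toNat) / (m + n.toNat).factorial *
        ((c / 2 * w⁻¹) ^ (m + (-n).toNat) / (m + (-n).toNat).factorial) =
      ((c / 2) ^ (2 * m + n.natAbs) / (m.factorial * (m + n.natAbs).factorial) : ℝ) * w ^ n := by
  obtain ⟨k, rfl | rfl⟩ := n.eq_nat_or_neg <;>
  · simp [mul_pow, pow_add, pow_mul']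
    field_simp

theorem hasSum_besselI_mul_zpow (c : ℝ) {w : ℂ} (hw : w ≠ 0) :
    HasSum (fun n : ℤ => (besselI n.natAbs c : ℂ) * w ^ n)
      (Complex.exp (c / 2 * (w + w⁻¹))) := by
  have hdouble := subMinEquiv.symm.hasSum_iff.2 (hasSum_exp_add (c / 2 * w) (c / 2 * w⁻¹))
  rw [← mul_add, ← Complex.exp_eq_exp_ℂ] at hdouble
  refine hdouble.prod_fiberwise fun n => ?_
  have hdiag := (Complex.hasSum_ofReal.2 (summable_besselI n.natAbs c).hasSum).mul_right (w ^ n)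
  exact hdiag.congr_fun (exp_diagonal_term_eq_besselI_term_mul_zpow c hw n)

theorem hasSum_besselI_mul_chebT (c y : ℝ) :
    HasSum (fun n : ℤ => besselI n.natAbs c * chebT n y) (Real.exp (c * y)) := by
  obtain ⟨θ, hθ⟩ := Complex.cos_surjective y
  set w := Complex.exp (θ * Complex.I) with hw
  have hw_inv : w⁻¹ = Complex.exp (-θ * Complex.I) := by rw [hw, neg_mul, Complex.exp_neg]
  have hy : (w + w⁻¹) / 2 = y := by rw [hw_inv, ← hθ, Complex.cos]
  have hT (n : ℤ) : (chebT n y : ℂ) = (w ^ n + w⁻¹ ^ n) / 2 := by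
    rw [chebT, Chebyshev.complex_ofReal_eval_T, ← hθ, Chebyshev.T_complex_cos, Complex.cos, hw_inv,
      hw, ← Complex.exp_int_mul, ← Complex.exp_int_mul]
    ring_nf
  have hw0 : w ≠ 0 := Complex.exp_ne_zero _
  have havg := ((hasSum_besselI_mul_zpow c hw0).add
    (hasSum_besselI_mul_zpow c (inv_ne_zero hw0))).div_const 2
  rw [← Complex.hasSum_ofReal]
  convert! havg using 1
  · ext n
    push_cast [hT]
    ring
  · push_cast
    rw [inv_inv, add_comm w⁻¹, add_self_div_two, ← hy]
    ring_nf

theorem hasSum_besselI_mul_divDiff_chebT (c : ℝ) (q : ℕ) (y : Fin (q + 1) → ℝ) :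
    HasSum (fun n : ℤ => besselI n.natAbs c * divDiff (chebT n) q y)
      (divDiff (fun t => Real.exp (c * t)) q y) := by
  have h := hasSum_divDiff (g := fun (n : ℤ) t => besselI n.natAbs c * chebT n t)
    (f := fun t => Real.exp (c * t)) q fun i => hasSum_besselI_mul_chebT c (y i)
  simpa only [divDiff_const_mul] using h

theorem chebT_neg (n : ℤ) : chebT (-n) = chebT n := by
  unfold chebT
  rw [Chebyshev.T_neg]

theorem divDiff_exp_mul_eq_tsum (c : ℝ) (q : ℕ) (y : Fin (q + 1) → ℝ) :
    divDiff (fun t => Real.exp (c * t)) q y =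
      besselI 0 c * divDiff (chebT 0) q y +
        2 * ∑' n : ℕ, besselI (n + 1) c * divDiff (chebT (n + 1)) q y := by
  have h := hasSum_besselI_mul_divDiff_chebT c q y
  have heven : Function.Even fun n : ℤ => besselI n.natAbs c * divDiff (chebT n) q y := fun n => by
    simp only [Int.natAbs_neg, chebT_neg]
  rw [← h.tsum_eq, tsum_int_eq_zero_add_two_mul_tsum_pnat heven h.summable]
  simp only [Int.natAbs_zero, Int.natAbs_natCast]
  rw [tsum_pnat_eq_tsum_succ (f := fun n : ℕ => besselI n c * divDiff (chebT n) q y)]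
  simp

theorem exp_divDiff_chebyshev_bessel_general (q : ℕ) (c d : ℝ) (hc : c ≠ 0)
    (x : Fin (q + 1) → ℝ) (hx : Function.Injective x) :
    let y : Fin (q + 1) → ℝ := fun i => (x i - d) / c
    Summable (fun n : ℕ => |(besselI (n + 1) c / besselI 0 c) * divDiff (chebT (n + 1)) q y|) ∧
    divDiff Real.exp q x =
      Real.exp d * besselI 0 c / c ^ q *
        (divDiff (chebT 0) q y +
          2 * ∑' n : ℕ, (besselI (n + 1) c / besselI 0 c) * divDiff (chebT (n + 1)) q y) := by
  intro y
  have hI := (besselI_zero_pos c).ne'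
  have hxy : x = fun i => c * y i + d := by
    ext i
    simp only [y, mul_div_cancel₀ _ hc, sub_add_cancel]
  simp only [div_mul_eq_mul_div]
  constructor
  · have hinj : Function.Injective fun n : ℕ => (n + 1 : ℤ) := fun m n h => by simpa using h
    exact (((hasSum_besselI_mul_divDiff_chebT c q y).summable.comp_injective hinj).div_const _).abs
  · rw [hxy, divDiff_affine_nodes, tsum_div_const]
    simp only [Real.exp_add, mul_comm _ (Real.exp d), divDiff_const_mul, divDiff_exp_mul_eq_tsum]
    field_simp

/-- Chebyshev–Bessel representation of exponential divided differences. -/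
theorem exp_divDiff_chebyshev_bessel (q : ℕ) (a b : ℝ) (hab : a < b)
    (x : Fin (q + 1) → ℝ) (hx : Function.Injective x)
    (hmem : ∀ i, x i ∈ Set.Icc a b) :
    let c := (b - a) / 2
    let d := (a + b) / 2
    let y : Fin (q + 1) → ℝ := fun i => (x i - d) / c
    Summable (fun n : ℕ => |(besselI (n + 1) c / besselI 0 c) * divDiff (chebT (n + 1)) q y|) ∧
    divDiff Real.exp q x =
      Real.exp d * besselI 0 c / c ^ q *
        (divDiff (chebT 0) q y +
          2 * ∑' n : ℕ, (besselI (n + 1) c / besselI 0 c) * divDiff (chebT (n + 1)) q y) := by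
  intro c d _
  exact exp_divDiff_chebyshev_bessel_general q c d (half_pos (sub_pos.2 hab)).ne' x hx
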